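/- arXiv:2601.18879 — 2 statements merged into one kernel-verified Lean document; each statement's English description precedes it below -/
import Mathlib

section
/- Let S = F₂[w, x, y, z] / ⟨w² − 1, x² − 1, y² − 1, z² − 1⟩, a 16-dimensional commutative F₂-algebra, and let F = (1 + x)(1 + yz), G = (1 + y)(1 + zw), H = (1 + z)(1 + wx), I = (1 + w)(1 + xy) in S. Let d₂ : S⁶ → S⁴ and d₃ : S⁴ → S⁶ be the S-linear maps given by multiplication by the block matrices D₂ = [[G,H,I,0,0,0],[F,0,0,H,I,0],[0,F,0,G,0,I],[0,0,F,0,G,H]] and D₃ = [[H,I,0,0],[G,0,I,0],[0,G,H,0],[F,0,0,I],[0,F,0,H],[0,0,F,G]], viewed as F₂-linear maps between F₂-vector spaces of dimensions 96 and 64. Then d₂ ∘ d₃ = 0 and dim_{F₂} ker(d₂) − dim_{F₂} im(d₃) = 44; i.e., this multivariate multicycle code encodes k = 44 logical qubits in n = 96 physical qubits. -/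
open MvPolynomial Matrix

set_option synthInstance.maxHeartbeats 1000000
set_option maxHeartbeats 2000000

noncomputable section

/-- The ideal `⟨w²−1, x²−1, y²−1, z²−1⟩` in `𝔽₂[w,x,y,z]`. -/
def relIdeal : Ideal (MvPolynomial (Fin 4) (ZMod 2)) :=
  Ideal.span {X 0 ^ 2 - 1, X 1 ^ 2 - 1, X 2 ^ 2 - 1, X 3 ^ 2 - 1}

/-- The 16-dimensional commutative `𝔽₂`-algebra `S = 𝔽₂[w,x,y,z]/⟨w²−1, x²−1, y²−1, z²−1⟩`. -/
abbrev Squot : Type := MvPolynomial (Fin 4) (ZMod 2) ⧸ relIdeal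

def wq : Squot := Ideal.Quotient.mk relIdeal (X 0)
def xq : Squot := Ideal.Quotient.mk relIdeal (X 1)
def yq : Squot := Ideal.Quotient.mk relIdeal (X 2)
def zq : Squot := Ideal.Quotient.mk relIdeal (X 3)

/-- `F = (1 + x)(1 + yz)`. -/ def Fq : Squot := (1 + xq) * (1 + yq * zq)
/-- `G = (1 + y)(1 + zw)`. -/ def Gq : Squot := (1 + yq) * (1 + zq * wq)
/-- `H = (1 + z)(1 + wx)`. -/ def Hq : Squot := (1 + zq) * (1 + wq * xq)
/-- `I = (1 + w)(1 + xy)`. -/ def Iq : Squot := (1 + wq) * (1 + xq * yq)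

/-- Second Koszul boundary map `D₂`. -/
def D2 : Matrix (Fin 4) (Fin 6) Squot :=
  !![Gq, Hq, Iq, 0, 0, 0;
     Fq, 0, 0, Hq, Iq, 0;
     0, Fq, 0, Gq, 0, Iq;
     0, 0, Fq, 0, Gq, Hq]

/-- Third Koszul boundary map `D₃`. -/
def D3 : Matrix (Fin 6) (Fin 4) Squot :=
  !![Hq, Iq, 0, 0;
     Gq, 0, Iq, 0;
     0, Gq, Hq, 0;
     Fq, 0, 0, Iq;
     0, Fq, 0, Hq;
     0, 0, Fq, Gq]

/-!
Put `a₀, …, a₃ = 1 + w, 1 + x, 1 + y, 1 + z`. Then `S = 𝔽₂[a₀, …, a₃] / (aᵢ²)`, with maximal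
ideal `𝔪 = (a₀, …, a₃)` and `dim 𝔪³ = 5`, and `F, G, H, I` lie in `𝔪²`, are linearly independent
modulo `𝔪³`, and satisfy `𝔪³ ⊆ Ann(f) (g : g ≠ f)` for each `f` among them. If `r f = 0`, then
`r` times the Koszul relation between `f` and `g` is `r g` times a basis vector, so `im d₂`
contains `𝔪³ S⁴`; modulo `𝔪³ S⁴` it is spanned by the six columns of `D₂`, which are independent.
Hence `d₂` has rank `6 + 4 · 5 = 26`. As `S` is a Frobenius algebra, a matrix over `S` and its
transpose have the same rank over `𝔽₂`, and `D₃` is `D₂ᵀ` up to reversing rows and columns. So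
`k = (96 - 26) - 26 = 44`.
-/

namespace MulticycleCode

section ScalarRank

variable {K A m n : Type*} [CommRing A]

/-- The rank over `K` of multiplication by a matrix `D` with entries in a `K`-algebra. -/
def scalarRank (K : Type*) [CommRing K] [Algebra K A] [Fintype n] (D : Matrix m n A) : ℕ :=
  Module.finrank K (LinearMap.range (D.mulVecLin.restrictScalars K))

section CommRing

variable [CommRing K] [Algebra K A]

theorem scalarRank_submatrix [Fintype n] {m' n' : Type*} [Fintype n']
    (D : Matrix m n A) (e₁ : m' ≃ m) (e₂ : n' ≃ n) :
    scalarRank K (D.submatrix e₁ e₂) = scalarRank K D := by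
  have range_eq : LinearMap.range ((D.submatrix e₁ e₂).mulVecLin.restrictScalars K) =
      (LinearMap.range (D.mulVecLin.restrictScalars K)).map
        (LinearEquiv.funCongrLeft K A e₁).toLinearMap := by
    rw [← LinearMap.range_comp, ← LinearMap.range_comp_of_range_eq_top _
      (LinearEquiv.range (LinearEquiv.funCongrLeft K A e₂.symm)), Matrix.mulVecLin_submatrix]
    rfl
  rw [scalarRank, range_eq, LinearEquiv.finrank_map_eq, scalarRank]

/-- The pairing `(u, v) ↦ τ (∑ i, u i * v i)` on `ι → A`, as a map to the dual space. -/
def dotDual {ι : Type*} [Fintype ι] (τ : A →ₗ[K] K) : (ι → A) →ₗ[K] Module.Dual K (ι → A) :=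
  (dotProductBilin K K).compr₂ τ

theorem dotDual_injective {ι : Type*} [Fintype ι] {τ : A →ₗ[K] K}
    (hτ : ∀ x ≠ 0, ∃ y, τ (x * y) ≠ 0) : Function.Injective (dotDual (ι := ι) τ) := by
  classical
  rw [injective_iff_map_eq_zero]
  intro u hu
  ext i
  by_contra hi
  obtain ⟨y, hy⟩ := hτ _ hi
  apply hy
  simpa [dotDual] using LinearMap.congr_fun hu (Pi.single i y)

end CommRing

/-- Under the pairing induced by `τ`, multiplication by `Dᵀ` is dual to multiplication by `D`. -/
theorem scalarRank_transpose [Field K] [Algebra K A] [Module.Finite K A] [Fintype m] [Fintype n]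
    {τ : A →ₗ[K] K} (hτ : ∀ x ≠ 0, ∃ y, τ (x * y) ≠ 0) (D : Matrix m n A) :
    scalarRank K Dᵀ = scalarRank K D := by
  have adjoint : dotDual τ ∘ₗ Dᵀ.mulVecLin.restrictScalars K =
      (D.mulVecLin.restrictScalars K).dualMap ∘ₗ dotDual τ := by
    ext u v
    simp [dotDual, Matrix.dotProduct_mulVec]
  have surjective : Function.Surjective (dotDual (ι := m) τ) :=
    (LinearMap.injective_iff_surjective_of_finrank_eq_finrank Subspace.dual_finrank_eq.symm).1
      (dotDual_injective hτ)
  calc scalarRank K Dᵀ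
      = Module.finrank K (LinearMap.range (dotDual τ ∘ₗ Dᵀ.mulVecLin.restrictScalars K)) := by
        rw [LinearMap.range_comp, scalarRank]
        exact (Submodule.equivMapOfInjective _ (dotDual_injective hτ) _).finrank_eq
    _ = Module.finrank K (LinearMap.range (D.mulVecLin.restrictScalars K).dualMap) := by
        rw [adjoint, LinearMap.range_comp_of_range_eq_top _ (LinearMap.range_eq_top.2 surjective)]
    _ = scalarRank K D := LinearMap.finrank_range_dualMap_eq_finrank_range _

end ScalarRank

section SquareZero

variable {σ K A : Type*} [CommRing A]

theorem prod_mul_prod_eq_zero_of_not_disjoint {a : σ → A} (ha : ∀ i, a i ^ 2 = 0)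
    {s t : Finset σ} (hst : ¬Disjoint s t) : (∏ i ∈ s, a i) * ∏ i ∈ t, a i = 0 := by
  obtain ⟨i, his, hit⟩ := Finset.not_disjoint_iff.1 hst
  have dvd : a i ^ 2 ∣ (∏ i ∈ s, a i) * ∏ i ∈ t, a i :=
    pow_two (a i) ▸ mul_dvd_mul (Finset.dvd_prod_of_mem a his) (Finset.dvd_prod_of_mem a hit)
  exact zero_dvd_iff.1 (ha i ▸ dvd)

theorem exists_sum_mul_prod_eq_smul_prod_univ [CommRing K] [Algebra K A] [Fintype σ]
    [DecidableEq σ] {a : σ → A} (ha : ∀ i, a i ^ 2 = 0) {c : Finset σ → K} (hc : c ≠ 0) :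
    ∃ u, c u ≠ 0 ∧ (∑ s, c s • ∏ i ∈ s, a i) * ∏ i ∈ uᶜ, a i = c u • ∏ i, a i := by
  obtain ⟨u, hu, minimal⟩ := exists_minimal_of_wellFoundedLT (c · ≠ 0) (Function.ne_iff.1 hc)
  refine ⟨u, hu, ?_⟩
  rw [Finset.sum_mul, Finset.sum_eq_single u, smul_mul_assoc, Finset.prod_mul_prod_compl]
  · intro s _ hsu
    rw [smul_mul_assoc]
    by_cases hs : c s = 0
    · rw [hs, zero_smul]
    · have not_disjoint : ¬Disjoint s uᶜ := fun hd =>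
        have hle : s ≤ u := disjoint_compl_right_iff.1 hd
        hsu (hle.antisymm (minimal hs hle))
      rw [prod_mul_prod_eq_zero_of_not_disjoint ha not_disjoint, smul_zero]
  · simp

theorem linearIndependent_prod [Field K] [Algebra K A] [Fintype σ] {a : σ → A}
    (ha : ∀ i, a i ^ 2 = 0) (hprod : ∏ i, a i ≠ 0) :
    LinearIndependent K fun s : Finset σ => ∏ i ∈ s, a i := by
  classical
  rw [Fintype.linearIndependent_iff]
  intro c hsum
  by_contra! hc
  obtain ⟨u, hu, hmul⟩ := exists_sum_mul_prod_eq_smul_prod_univ ha (Function.ne_iff.2 hc)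
  rw [hsum, zero_mul] at hmul
  exact smul_ne_zero hu hprod hmul.symm

section Span

variable [CommRing K] [Algebra K A] (a : σ → A)

/-- The `K`-span of the squarefree monomials of degree at least `k` in the `a i`. -/
def squarefreeSpan (K : Type*) [CommRing K] [Algebra K A] (a : σ → A) (k : ℕ) : Submodule K A :=
  Submodule.span K (Set.range fun s : {s : Finset σ // k ≤ s.card} => ∏ i ∈ s.1, a i)

variable {a}

theorem prod_mem_squarefreeSpan {k : ℕ} {s : Finset σ} (hs : k ≤ s.card) :
    ∏ i ∈ s, a i ∈ squarefreeSpan K a k :=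
  Submodule.subset_span ⟨⟨s, hs⟩, rfl⟩

theorem squarefreeSpan_succ_le (k : ℕ) : squarefreeSpan K a (k + 1) ≤ squarefreeSpan K a k :=
  Submodule.span_le.2 (Set.range_subset_iff.2 fun s =>
    prod_mem_squarefreeSpan (Nat.le_of_succ_le s.2))

theorem gen_mul_mem_squarefreeSpan (ha : ∀ i, a i ^ 2 = 0) (i : σ) {k : ℕ} {x : A}
    (hx : x ∈ squarefreeSpan K a k) : a i * x ∈ squarefreeSpan K a (k + 1) := by
  classical
  suffices squarefreeSpan K a k ≤
      (squarefreeSpan K a (k + 1)).comap (LinearMap.mulLeft K (a i)) from this hx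
  refine Submodule.span_le.2 (Set.range_subset_iff.2 fun ⟨s, hs⟩ => ?_)
  change a i * ∏ j ∈ s, a j ∈ squarefreeSpan K a (k + 1)
  by_cases his : i ∈ s
  · have mul_eq_zero := prod_mul_prod_eq_zero_of_not_disjoint ha
      (Finset.disjoint_singleton_left.not.2 (not_not.2 his))
    rw [Finset.prod_singleton] at mul_eq_zero
    exact mul_eq_zero ▸ zero_mem _
  · rw [← Finset.prod_insert his]
    exact prod_mem_squarefreeSpan (by rw [Finset.card_insert_of_notMem his]; lia)

theorem mul_mem_squarefreeSpan (ha : ∀ i, a i ^ 2 = 0)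
    (hgen : Algebra.adjoin K (Set.range a) = ⊤) (y : A) {k : ℕ} {x : A}
    (hx : x ∈ squarefreeSpan K a k) : y * x ∈ squarefreeSpan K a k := by
  have hy : y ∈ Algebra.adjoin K (Set.range a) := hgen ▸ Algebra.mem_top
  induction hy using Algebra.adjoin_induction generalizing x with
  | mem _ hmem =>
    obtain ⟨i, rfl⟩ := hmem
    exact squarefreeSpan_succ_le k (gen_mul_mem_squarefreeSpan ha i hx)
  | algebraMap r =>
    rw [← Algebra.smul_def]
    exact Submodule.smul_mem _ r hx
  | add _ _ _ _ h₁ h₂ => rw [add_mul]; exact add_mem (h₁ hx) (h₂ hx)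
  | mul _ _ _ _ h₁ h₂ => rw [mul_assoc]; exact h₁ (h₂ hx)

theorem mul_mem_squarefreeSpan_succ (ha : ∀ i, a i ^ 2 = 0)
    (hgen : Algebra.adjoin K (Set.range a) = ⊤) {k : ℕ} {x y : A}
    (hy : y ∈ Ideal.span (Set.range a)) (hx : x ∈ squarefreeSpan K a k) :
    y * x ∈ squarefreeSpan K a (k + 1) := by
  induction hy using Submodule.span_induction with
  | mem _ hmem =>
    obtain ⟨i, rfl⟩ := hmem
    exact gen_mul_mem_squarefreeSpan ha i hx
  | zero => rw [zero_mul]; exact zero_mem _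
  | add _ _ _ _ h₁ h₂ => rw [add_mul]; exact add_mem h₁ h₂
  | smul r _ _ h =>
    rw [smul_mul_assoc]
    exact mul_mem_squarefreeSpan ha hgen r h

theorem restrictScalars_span_range_pow (ha : ∀ i, a i ^ 2 = 0)
    (hgen : Algebra.adjoin K (Set.range a) = ⊤) (k : ℕ) :
    (Ideal.span (Set.range a) ^ k).restrictScalars K = squarefreeSpan K a k := by
  apply le_antisymm
  · induction k with
    | zero =>
      intro x _
      simpa using mul_mem_squarefreeSpan ha hgen x
        (prod_mem_squarefreeSpan (K := K) (a := a) (s := ∅) le_rfl)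
    | succ k ih =>
      intro x hx
      rw [Submodule.restrictScalars_mem, pow_succ'] at hx
      exact Submodule.mul_induction_on hx
        (fun y hy z hz => mul_mem_squarefreeSpan_succ ha hgen hy (ih hz)) fun _ _ => add_mem
  · refine Submodule.span_le.2 (Set.range_subset_iff.2 fun ⟨s, hs⟩ => ?_)
    refine Ideal.pow_le_pow_right hs ?_
    simpa using Ideal.prod_mem_prod (s := s) (I := fun _ => Ideal.span (Set.range a))
      fun i _ => Ideal.subset_span (Set.mem_range_self i)

theorem span_range_pow_le (ha : ∀ i, a i ^ 2 = 0)
    (hgen : Algebra.adjoin K (Set.range a) = ⊤) {k : ℕ} {J : Ideal A}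
    (hJ : ∀ s : Finset σ, s.card = k → ∏ i ∈ s, a i ∈ J) : Ideal.span (Set.range a) ^ k ≤ J := by
  suffices squarefreeSpan K a k ≤ J.restrictScalars K by
    rwa [← restrictScalars_span_range_pow ha hgen] at this
  refine Submodule.span_le.2 (Set.range_subset_iff.2 fun ⟨s, hs⟩ => ?_)
  obtain ⟨t, hts, ht⟩ := Finset.exists_subset_card_eq hs
  exact J.mem_of_dvd (Finset.prod_dvd_prod_of_subset t s a hts) (hJ t ht)

theorem exists_sub_algebraMap_mem_span_range (hgen : Algebra.adjoin K (Set.range a) = ⊤) (x : A) :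
    ∃ r, x - algebraMap K A r ∈ Ideal.span (Set.range a) := by
  have hx : x ∈ Algebra.adjoin K (Set.range a) := hgen ▸ Algebra.mem_top
  induction hx using Algebra.adjoin_induction with
  | mem x hx => exact ⟨0, by simpa using Ideal.subset_span hx⟩
  | algebraMap r => exact ⟨r, by simp⟩
  | add x y _ _ hx hy =>
    obtain ⟨⟨r, hr⟩, s, hs⟩ := hx, hy
    refine ⟨r + s, ?_⟩
    rw [map_add, add_sub_add_comm]
    exact add_mem hr hs
  | mul x y _ _ hx hy =>
    obtain ⟨⟨r, hr⟩, s, hs⟩ := hx, hy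
    refine ⟨r * s, ?_⟩
    rw [map_mul, ← sub_add_sub_cancel _ (x * algebraMap K A s), ← mul_sub, ← sub_mul]
    exact add_mem (Ideal.mul_mem_left _ x hs) (Ideal.mul_mem_right _ _ hr)

theorem span_prod_eq_top (ha : ∀ i, a i ^ 2 = 0) (hgen : Algebra.adjoin K (Set.range a) = ⊤) :
    Submodule.span K (Set.range fun s : Finset σ => ∏ i ∈ s, a i) = ⊤ := by
  have span_eq_top : squarefreeSpan K a 0 = ⊤ := by
    rw [← restrictScalars_span_range_pow ha hgen, pow_zero, Ideal.one_eq_top,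
      Submodule.restrictScalars_top]
  exact top_le_iff.1 (span_eq_top.ge.trans
    (Submodule.span_mono (Set.range_subset_iff.2 fun s => ⟨s.1, rfl⟩)))

end Span

variable [Field K] [Algebra K A] [Fintype σ] {a : σ → A}

theorem finrank_span_range_pow (ha : ∀ i, a i ^ 2 = 0)
    (hgen : Algebra.adjoin K (Set.range a) = ⊤) (hprod : ∏ i, a i ≠ 0) (k : ℕ) :
    Module.finrank K ↥(Ideal.span (Set.range a) ^ k) =
      Fintype.card {s : Finset σ // k ≤ s.card} := by
  change Module.finrank K ((Ideal.span (Set.range a) ^ k).restrictScalars K) = _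
  rw [restrictScalars_span_range_pow ha hgen]
  exact finrank_span_eq_card ((linearIndependent_prod ha hprod).comp _ Subtype.val_injective)

theorem finrank_eq_two_pow (ha : ∀ i, a i ^ 2 = 0)
    (hgen : Algebra.adjoin K (Set.range a) = ⊤) (hprod : ∏ i, a i ≠ 0) :
    Module.finrank K A = 2 ^ Fintype.card σ := by
  rw [Module.finrank_eq_card_basis (.mk (linearIndependent_prod ha hprod)
    (span_prod_eq_top ha hgen).ge), Fintype.card_finset]

theorem exists_dual_mul_ne_zero (ha : ∀ i, a i ^ 2 = 0)
    (hgen : Algebra.adjoin K (Set.range a) = ⊤) (hprod : ∏ i, a i ≠ 0) :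
    ∃ τ : A →ₗ[K] K, ∀ x ≠ 0, ∃ y, τ (x * y) ≠ 0 := by
  classical
  obtain ⟨τ, hτ⟩ : ∃ τ : Module.Dual K A, τ (∏ i, a i) ≠ 0 := by
    by_contra! h
    exact hprod ((Module.forall_dual_apply_eq_zero_iff K _).1 h)
  refine ⟨τ, fun x hx => ?_⟩
  obtain ⟨c, rfl⟩ := (Submodule.mem_span_range_iff_exists_fun K).1
    (span_prod_eq_top ha hgen ▸ Submodule.mem_top : x ∈ _)
  have hc : c ≠ 0 := by rintro rfl; simp at hx
  obtain ⟨u, hu, hmul⟩ := exists_sum_mul_prod_eq_smul_prod_univ ha hc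
  refine ⟨∏ i ∈ uᶜ, a i, ?_⟩
  rw [hmul, map_smul]
  exact smul_ne_zero hu hτ

end SquareZero

section Koszul

variable {ι K A : Type*} [LinearOrder ι] [CommRing A]

/-- The boundary map `∂₂` of the Koszul complex on `f`, with columns indexed by pairs `i < j`. -/
def koszulMatrix (f : ι → A) : Matrix ι {p : ι × ι // p.1 < p.2} A :=
  (Matrix.of fun p => Pi.single p.1.1 (f p.1.2) - Pi.single p.1.2 (f p.1.1))ᵀ

theorem koszulMatrix_apply (f : ι → A) (i : ι) (p : {p : ι × ι // p.1 < p.2}) :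
    koszulMatrix f i p = (if i = p.1.1 then f p.1.2 else 0) - if i = p.1.2 then f p.1.1 else 0 := by
  simp [koszulMatrix, Pi.single_apply]

theorem koszulMatrix_eq_sum_smul [Fintype ι] [CommRing K] [Algebra K A] (f : ι → A) (i : ι)
    (p : {p : ι × ι // p.1 < p.2}) :
    koszulMatrix f i p = ∑ j, koszulMatrix (Pi.single j (1 : K)) i p • f j := by
  simp [koszulMatrix_apply, Pi.single_apply, sub_smul, ite_smul, Finset.sum_ite_irrel]

theorem koszulMatrix_single_one [CommRing K] (p q : {p : ι × ι // p.1 < p.2}) :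
    koszulMatrix (Pi.single q.1.2 (1 : K)) q.1.1 p = if p = q then 1 else 0 := by
  obtain ⟨⟨⟨i, j⟩, hij⟩, ⟨k, l⟩, hkl⟩ := p, q
  have not_swapped : ¬(j = k ∧ i = l) := by rintro ⟨rfl, rfl⟩; exact hij.asymm hkl
  simp [koszulMatrix_apply, Pi.single_apply, ← ite_and, not_swapped, eq_comm (a := k)]

variable [Fintype ι]

theorem single_mem_range_koszulMatrix {f : ι → A} {i j : ι} (hij : i ≠ j) {r : A}
    (hr : r * f i = 0) : Pi.single i (r * f j) ∈ LinearMap.range (koszulMatrix f).mulVecLin := by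
  rcases hij.lt_or_gt with hlt | hgt
  · refine ⟨Pi.single ⟨(i, j), hlt⟩ r, ?_⟩
    ext k
    simp [koszulMatrix_apply, Pi.single_apply, sub_mul, ite_mul, mul_comm (f _) r, hr]
  · refine ⟨Pi.single ⟨(j, i), hgt⟩ (-r), ?_⟩
    ext k
    simp [koszulMatrix_apply, Pi.single_apply, sub_mul, ite_mul, mul_comm (f _) r, hr]

theorem single_mem_range_koszulMatrix_of_mem_annihilator_mul {f : ι → A} {i : ι} {x : A}
    (hx : x ∈ (Ideal.span {f i}).annihilator * Ideal.span (f '' {i}ᶜ)) :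
    Pi.single i x ∈ LinearMap.range (koszulMatrix f).mulVecLin := by
  suffices (Ideal.span {f i}).annihilator * Ideal.span (f '' {i}ᶜ) ≤
      (LinearMap.range (koszulMatrix f).mulVecLin).comap (LinearMap.single A (fun _ => A) i) from
    this hx
  refine Ideal.mul_le.2 fun r hr s hs => ?_
  suffices Ideal.span (f '' {i}ᶜ) ≤ ((LinearMap.range (koszulMatrix f).mulVecLin).comap
      (LinearMap.single A (fun _ => A) i)).comap (LinearMap.mulLeft A r) from this hs
  refine Ideal.span_le.2 (Set.image_subset_iff.2 fun j hj => ?_)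
  exact single_mem_range_koszulMatrix (Ne.symm hj)
    ((Submodule.mem_annihilator_span_singleton _ _).1 hr)

section CommRing

variable [CommRing K] [Algebra K A]

/-- The sum of the `K`-combinations of the columns of `koszulMatrix f` and the vectors with entries
in `P`; it parametrizes the image of `∂₂` when `P` is the ideal of higher order terms. -/
def koszulSum (K : Type*) [CommRing K] [Algebra K A] (f : ι → A) (P : Ideal A) :
    ({p : ι × ι // p.1 < p.2} → K) × (ι → P) →ₗ[K] (ι → A) :=
  (Fintype.linearCombination K (koszulMatrix f).col).coprod
    ((P.subtype.restrictScalars K).compLeft ι)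

theorem koszulSum_injective {f : ι → A} {P : Ideal A}
    (hind : ∀ c : ι → K, ∑ i, c i • f i ∈ P → c = 0) :
    Function.Injective (koszulSum K f P) := by
  rw [injective_iff_map_eq_zero]
  rintro ⟨c, v⟩ hcv
  have sum_mem (i : ι) : ∑ p, c p • koszulMatrix f i p ∈ P := by
    have hi : ∑ p, c p • koszulMatrix f i p + v i = 0 := by
      simpa [koszulSum, Fintype.linearCombination_apply] using congr_fun hcv i
    rw [eq_neg_of_add_eq_zero_left hi]
    exact neg_mem (v i).2
  have hc : c = 0 := by
    ext q
    have coeff_sum : ∑ j, (∑ p, c p * koszulMatrix (Pi.single j 1) q.1.1 p) • f j =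
        ∑ p, c p • koszulMatrix f q.1.1 p := by
      simp_rw [koszulMatrix_eq_sum_smul (K := K) f, Finset.smul_sum, Finset.sum_smul, mul_smul]
      exact Finset.sum_comm
    have coeff_eq_zero := congr_fun (hind _ (coeff_sum ▸ sum_mem q.1.1)) q.1.2
    simp_rw [koszulMatrix_single_one] at coeff_eq_zero
    simpa using coeff_eq_zero
  subst hc
  ext i
  · rfl
  · simpa [koszulSum] using congr_fun hcv i

theorem range_koszulSum {f : ι → A} {𝔪 P : Ideal A}
    (hres : ∀ x : A, ∃ r, x - algebraMap K A r ∈ 𝔪) (hf : ∀ i, ∀ x ∈ 𝔪, x * f i ∈ P)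
    (hP : ∀ i, P ≤ (Ideal.span {f i}).annihilator * Ideal.span (f '' {i}ᶜ)) :
    LinearMap.range (koszulSum K f P) =
      LinearMap.range ((koszulMatrix f).mulVecLin.restrictScalars K) := by
  apply le_antisymm
  · rw [koszulSum, LinearMap.range_coprod, Fintype.range_linearCombination]
    refine sup_le (Submodule.span_le.2 (Set.range_subset_iff.2 fun p => ?_)) ?_
    · exact ⟨Pi.single p 1, by simp⟩
    · rintro _ ⟨v, rfl⟩
      rw [← Finset.univ_sum_single ((P.subtype.restrictScalars K).compLeft ι v)]
      exact sum_mem fun i _ =>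
        single_mem_range_koszulMatrix_of_mem_annihilator_mul (hP i (v i).2)
  · rintro _ ⟨v, rfl⟩
    rw [LinearMap.restrictScalars_apply, Matrix.mulVecLin_apply, Matrix.mulVec_eq_sum]
    refine sum_mem fun p _ => ?_
    obtain ⟨r, hr⟩ := hres (v p)
    have higher_order (i : ι) : (v p - algebraMap K A r) * koszulMatrix f i p ∈ P := by
      rw [koszulMatrix_apply, mul_sub, mul_ite, mul_ite, mul_zero]
      refine sub_mem ?_ ?_ <;> split_ifs <;> simp [hf _ _ hr]
    refine ⟨(Pi.single p r, fun i => ⟨_, higher_order i⟩), ?_⟩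
    ext i
    simp [koszulSum, Algebra.smul_def, ← add_mul, mul_comm (v p)]

end CommRing

theorem scalarRank_koszulMatrix [Field K] [Algebra K A] [Module.Finite K A] {f : ι → A}
    {𝔪 P : Ideal A} (hres : ∀ x : A, ∃ r, x - algebraMap K A r ∈ 𝔪)
    (hf : ∀ i, ∀ x ∈ 𝔪, x * f i ∈ P)
    (hind : ∀ c : ι → K, ∑ i, c i • f i ∈ P → c = 0)
    (hP : ∀ i, P ≤ (Ideal.span {f i}).annihilator * Ideal.span (f '' {i}ᶜ)) :
    scalarRank K (koszulMatrix f) =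
      Fintype.card {p : ι × ι // p.1 < p.2} + Fintype.card ι * Module.finrank K P := by
  have : Module.Finite K P :=
    .of_injective (P.subtype.restrictScalars K) Subtype.val_injective
  rw [scalarRank, ← range_koszulSum hres hf hP,
    LinearMap.finrank_range_of_inj (koszulSum_injective hind), Module.finrank_prod,
    Module.finrank_fintype_fun_eq_card, Module.finrank_pi_fintype, Finset.sum_const,
    Finset.card_univ, smul_eq_mul]

end Koszul

section CyclicForms

variable {K A : Type*} [CommRing A] {a : Fin 4 → A}

/-- The forms `aᵢ₊₁ (aᵢ₊₂ + aᵢ₊₃ + aᵢ₊₂ aᵢ₊₃)`, indices modulo 4. With `aᵢ = 1 + xᵢ` in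
characteristic 2 they are `(1 + xᵢ₊₁) (1 + xᵢ₊₂ xᵢ₊₃)`. -/
def cyclicForm (a : Fin 4 → A) (i : Fin 4) : A :=
  a (i + 1) * (a (i + 2) + a (i + 3) + a (i + 2) * a (i + 3))

theorem cyclicForm_add_one (i : Fin 4) :
    cyclicForm a (i + 1) = a (i + 2) * (a (i + 3) + a i + a (i + 3) * a i) := by
  fin_cases i <;> rfl

theorem cyclicForm_add_two (i : Fin 4) :
    cyclicForm a (i + 2) = a (i + 3) * (a i + a (i + 1) + a i * a (i + 1)) := by
  fin_cases i <;> rfl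

theorem cyclicForm_add_three (i : Fin 4) :
    cyclicForm a (i + 3) = a i * (a (i + 1) + a (i + 2) + a (i + 1) * a (i + 2)) := by
  fin_cases i <;> rfl

theorem gen_mul_cyclicForm_eq_zero (ha : ∀ i, a i ^ 2 = 0) (i : Fin 4) :
    a (i + 1) * cyclicForm a i = 0 := by
  rw [cyclicForm]
  linear_combination (a (i + 2) + a (i + 3) + a (i + 2) * a (i + 3)) * ha (i + 1)

theorem factor_mul_cyclicForm_eq_zero [CharP A 2] (ha : ∀ i, a i ^ 2 = 0) (i : Fin 4) :
    (a (i + 2) + a (i + 3) + a (i + 2) * a (i + 3)) * cyclicForm a i = 0 := by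
  have two_eq_zero : (2 : A) = 0 := CharTwo.two_eq_zero
  rw [cyclicForm]
  linear_combination a (i + 1) * (1 + a (i + 3)) ^ 2 * ha (i + 2) + a (i + 1) * ha (i + 3) +
    a (i + 1) * a (i + 2) * a (i + 3) * (1 + a (i + 3)) * two_eq_zero

theorem mul_cyclicForm_mem_annihilator_mul {i j : Fin 4} (hji : j ≠ i) {r : A}
    (hr : r * cyclicForm a i = 0) : r * cyclicForm a j ∈
      (Ideal.span {cyclicForm a i}).annihilator * Ideal.span (cyclicForm a '' {i}ᶜ) :=
  Ideal.mul_mem_mul ((Submodule.mem_annihilator_span_singleton _ _).2 hr)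
    (Ideal.subset_span ⟨j, hji, rfl⟩)

theorem finset_fin_four_eq_of_card_eq_three :
    ∀ (i : Fin 4) (s : Finset (Fin 4)), s.card = 3 →
      s = {i, i + 1, i + 2} ∨ s = {i, i + 1, i + 3} ∨ s = {i, i + 2, i + 3} ∨
        s = {i + 1, i + 2, i + 3} := by
  decide

theorem prod_mem_annihilator_mul [CharP A 2] (ha : ∀ i, a i ^ 2 = 0) (i : Fin 4)
    {s : Finset (Fin 4)} (hs : s.card = 3) : ∏ j ∈ s, a j ∈
      (Ideal.span {cyclicForm a i}).annihilator * Ideal.span (cyclicForm a '' {i}ᶜ) := by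
  have gen_mul := gen_mul_cyclicForm_eq_zero ha i
  have factor_mul := factor_mul_cyclicForm_eq_zero ha i
  rcases finset_fin_four_eq_of_card_eq_three i s hs with rfl | rfl | rfl | rfl
  · convert mul_cyclicForm_mem_annihilator_mul (j := i + 3) (by simp) gen_mul using 1
    rw [cyclicForm_add_three, Finset.prod_insert (by simp), Finset.prod_pair (by simp)]
    linear_combination -a i * (1 + a (i + 2)) * ha (i + 1)
  · convert mul_cyclicForm_mem_annihilator_mul (j := i + 2) (by simp) gen_mul using 1
    rw [cyclicForm_add_two, Finset.prod_insert (by simp), Finset.prod_pair (by simp)]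
    linear_combination -a (i + 3) * (1 + a i) * ha (i + 1)
  · convert mul_cyclicForm_mem_annihilator_mul (j := i + 1) (by simp) factor_mul using 1
    rw [cyclicForm_add_one, Finset.prod_insert (by simp), Finset.prod_pair (by simp)]
    linear_combination -(1 + a (i + 3)) * (a (i + 3) + a i + a (i + 3) * a i) * ha (i + 2) -
      a (i + 2) * (1 + a i) * ha (i + 3)
  · convert sub_mem (mul_cyclicForm_mem_annihilator_mul (j := i + 1) (by simp) gen_mul)
      (Ideal.mul_mem_left _ (1 + a (i + 3))
        (mul_cyclicForm_mem_annihilator_mul (j := i + 3) (by simp) gen_mul)) using 1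
    rw [cyclicForm_add_one, cyclicForm_add_three, Finset.prod_insert (by simp),
      Finset.prod_pair (by simp)]
    linear_combination a i * (1 + a (i + 2)) * (1 + a (i + 3)) * ha (i + 1)

theorem cyclicForm_mem_span_range_sq (i : Fin 4) :
    cyclicForm a i ∈ Ideal.span (Set.range a) ^ 2 := by
  have gen_mem (j : Fin 4) : a j ∈ Ideal.span (Set.range a) := Ideal.subset_span ⟨j, rfl⟩
  rw [cyclicForm, sq]
  exact Ideal.mul_mem_mul (gen_mem _)
    (add_mem (add_mem (gen_mem _) (gen_mem _)) (Ideal.mul_mem_left _ _ (gen_mem _)))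

theorem gen_mul_gen_mul_cyclicForm (ha : ∀ i, a i ^ 2 = 0) (i j : Fin 4) :
    a i * a (i + 3) * cyclicForm a j = if j = i then ∏ k, a k else 0 := by
  have eq_add : ∀ i j : Fin 4, j = i ∨ j = i + 1 ∨ j = i + 2 ∨ j = i + 3 := by decide
  have prod_univ : ∏ k, a k = a i * a (i + 1) * a (i + 2) * a (i + 3) := by
    rw [Fin.prod_univ_four]
    fin_cases i <;>
      simp only [Fin.isValue, Fin.zero_eta, Fin.mk_one, Fin.reduceFinMk, Fin.reduceAdd,
        zero_add] <;>
      ring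
  rcases eq_add i j with rfl | rfl | rfl | rfl
  · rw [if_pos rfl, cyclicForm, prod_univ]
    linear_combination a j * a (j + 1) * (1 + a (j + 2)) * ha (j + 3)
  · rw [if_neg (by simp), cyclicForm_add_one]
    linear_combination a (i + 2) * a i * (1 + a i) * ha (i + 3) +
      a (i + 2) * a (i + 3) * ha i
  · rw [if_neg (by simp), cyclicForm_add_two]
    linear_combination a i * (a i + a (i + 1) + a i * a (i + 1)) * ha (i + 3)
  · rw [if_neg (by simp), cyclicForm_add_three]
    linear_combination a (i + 3) * (a (i + 1) + a (i + 2) + a (i + 1) * a (i + 2)) * ha i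

theorem eq_zero_of_sum_smul_cyclicForm_mem [Field K] [Algebra K A] (ha : ∀ i, a i ^ 2 = 0)
    (hgen : Algebra.adjoin K (Set.range a) = ⊤) (hprod : ∏ i, a i ≠ 0) {c : Fin 4 → K}
    (hc : ∑ i, c i • cyclicForm a i ∈ Ideal.span (Set.range a) ^ 3) : c = 0 := by
  have pow_five_le : Ideal.span (Set.range a) ^ 5 ≤ ⊥ := span_range_pow_le ha hgen fun s hs =>
    absurd (s.card_le_univ.trans_lt' (hs ▸ Nat.lt_add_one 4)) (lt_irrefl _)
  ext i
  have gen_mem (j : Fin 4) : a j ∈ Ideal.span (Set.range a) := Ideal.subset_span ⟨j, rfl⟩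
  have mul_eq_zero : a i * a (i + 3) * ∑ j, c j • cyclicForm a j = 0 := by
    apply pow_five_le
    rw [show 5 = 2 + 3 from rfl, pow_add, sq]
    exact Ideal.mul_mem_mul (Ideal.mul_mem_mul (gen_mem i) (gen_mem _)) hc
  have smul_eq_zero : c i • ∏ k, a k = 0 := by
    simpa [Finset.mul_sum, gen_mul_gen_mul_cyclicForm ha] using mul_eq_zero
  exact (smul_eq_zero_iff_left hprod).1 smul_eq_zero

theorem scalarRank_koszulMatrix_cyclicForm [Field K] [CharP K 2] [Algebra K A]
    (ha : ∀ i, a i ^ 2 = 0) (hgen : Algebra.adjoin K (Set.range a) = ⊤) (hprod : ∏ i, a i ≠ 0) :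
    scalarRank K (koszulMatrix (cyclicForm a)) = 26 := by
  have : Nontrivial A := ⟨_, _, hprod⟩
  have : CharP A 2 := charP_of_injective_algebraMap (algebraMap K A).injective 2
  have : Module.Finite K A :=
    Module.finite_of_finrank_pos (by rw [finrank_eq_two_pow ha hgen hprod]; positivity)
  have higher_order (i : Fin 4) : ∀ x ∈ Ideal.span (Set.range a),
      x * cyclicForm a i ∈ Ideal.span (Set.range a) ^ 3 := fun x hx => by
    rw [pow_succ']
    exact Ideal.mul_mem_mul hx (cyclicForm_mem_span_range_sq i)
  rw [scalarRank_koszulMatrix (exists_sub_algebraMap_mem_span_range hgen) higher_order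
      (fun _ => eq_zero_of_sum_smul_cyclicForm_mem ha hgen hprod)
      fun i => span_range_pow_le ha hgen fun _ => prod_mem_annihilator_mul ha i,
    finrank_span_range_pow ha hgen hprod]
  rfl

end CyclicForms

theorem prod_X_notMem_span_range_X_sq {σ R : Type*} [Fintype σ] [CommRing R] [Nontrivial R] :
    ∏ i, (X i : MvPolynomial σ R) ∉ Ideal.span (Set.range fun i => X i ^ 2) := by
  classical
  have prod_eq_monomial :
      ∏ i, (X i : MvPolynomial σ R) = monomial (∑ i, Finsupp.single i 1) 1 :=
    (monomial_sum_one _ _).symm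
  have range_eq_image : Set.range (fun i => (X i : MvPolynomial σ R) ^ 2) =
      (monomial · 1) '' Set.range fun i => Finsupp.single i 2 := by
    simp_rw [← Set.range_comp, X_pow_eq_monomial, Function.comp_def]
  rw [prod_eq_monomial, range_eq_image, mem_ideal_span_monomial_image]
  intro h
  obtain ⟨_, ⟨i, rfl⟩, hle⟩ := h (∑ i, Finsupp.single i 1) (by simp [support_monomial])
  simpa [Finsupp.finsetSum_apply, Finsupp.single_apply] using hle i

section Squot

/-- The nilpotent generators `1 + w, 1 + x, 1 + y, 1 + z` of `Squot`. -/
def nilGen (i : Fin 4) : Squot := 1 + Ideal.Quotient.mk relIdeal (X i)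

theorem two_eq_zero : (2 : Squot) = 0 :=
  calc (2 : Squot) = algebraMap (ZMod 2) Squot 2 := (map_ofNat _ 2).symm
    _ = 0 := by rw [CharTwo.two_eq_zero (R := ZMod 2), map_zero]

theorem nilGen_sq (i : Fin 4) : nilGen i ^ 2 = 0 := by
  have sq_eq_one : Ideal.Quotient.mk relIdeal (X i ^ 2 - 1) = 0 := by
    refine Ideal.Quotient.eq_zero_iff_mem.2 (Ideal.subset_span ?_)
    fin_cases i <;> simp
  rw [map_sub, map_pow, map_one] at sq_eq_one
  rw [nilGen]
  linear_combination sq_eq_one + (1 + Ideal.Quotient.mk relIdeal (X i)) * two_eq_zero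

theorem adjoin_range_nilGen : Algebra.adjoin (ZMod 2) (Set.range nilGen) = ⊤ := by
  have mk_X_mem (i : Fin 4) :
      Ideal.Quotient.mk relIdeal (X i) ∈ Algebra.adjoin (ZMod 2) (Set.range nilGen) := by
    rw [← add_sub_cancel_left 1 (Ideal.Quotient.mk relIdeal (X i))]
    exact sub_mem (Algebra.subset_adjoin ⟨i, rfl⟩) (one_mem _)
  have comap_eq_top : (Algebra.adjoin (ZMod 2) (Set.range nilGen)).comap
      (Ideal.Quotient.mkₐ (ZMod 2) relIdeal) = ⊤ := by
    rw [← top_le_iff, ← adjoin_range_X, Algebra.adjoin_le_iff]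
    exact Set.range_subset_iff.2 mk_X_mem
  rw [← top_le_iff]
  intro s _
  obtain ⟨p, rfl⟩ := Ideal.Quotient.mk_surjective s
  exact (comap_eq_top ▸ Algebra.mem_top : p ∈ _)

theorem prod_nilGen_ne_zero : ∏ i, nilGen i ≠ 0 := by
  let shift : MvPolynomial (Fin 4) (ZMod 2) →ₐ[ZMod 2] MvPolynomial (Fin 4) (ZMod 2) :=
    aeval fun i => 1 + X i
  have two_eq_zero : (2 : MvPolynomial (Fin 4) (ZMod 2)) = 0 := CharTwo.two_eq_zero
  have shift_sq_sub_one (i : Fin 4) : shift (X i ^ 2 - 1) = X i ^ 2 := by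
    simp only [shift, map_sub, map_pow, aeval_X, map_one]
    linear_combination X i * two_eq_zero
  have relIdeal_le : relIdeal ≤ (Ideal.span (Set.range fun i => X i ^ 2)).comap shift := by
    simp only [relIdeal, Ideal.span_le, Set.insert_subset_iff, Set.singleton_subset_iff,
      SetLike.mem_coe, Ideal.mem_comap, shift_sq_sub_one]
    exact ⟨Ideal.subset_span ⟨0, rfl⟩, Ideal.subset_span ⟨1, rfl⟩, Ideal.subset_span ⟨2, rfl⟩,
      Ideal.subset_span ⟨3, rfl⟩⟩
  have shift_prod : shift (∏ i, (1 + X i)) = ∏ i, X i := by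
    simp only [shift, map_prod, map_add, aeval_X, map_one]
    refine Finset.prod_congr rfl fun i _ => ?_
    linear_combination two_eq_zero
  intro prod_eq_zero
  have prod_mem : ∏ i, (1 + X i) ∈ relIdeal := by
    rw [← Ideal.Quotient.eq_zero_iff_mem, ← prod_eq_zero]
    simp [nilGen]
  apply prod_X_notMem_span_range_X_sq (σ := Fin 4) (R := ZMod 2)
  rw [← shift_prod]
  exact relIdeal_le prod_mem

theorem cyclicForm_nilGen : cyclicForm nilGen = ![Fq, Gq, Hq, Iq] := by
  have factor (u v : Squot) : (1 + u) + (1 + v) + (1 + u) * (1 + v) = 1 + u * v := by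
    linear_combination (1 + u + v) * two_eq_zero
  ext i
  fin_cases i
  · exact congr_arg (_ * ·) (factor yq zq)
  · exact congr_arg (_ * ·) (factor zq wq)
  · exact congr_arg (_ * ·) (factor wq xq)
  · exact congr_arg (_ * ·) (factor xq yq)

/-- The pairs `i < j` in `Fin 4` in lexicographic order, the order of the columns of `D2`. -/
def lexPair : Fin 6 ≃ {p : Fin 4 × Fin 4 // p.1 < p.2} :=
  Equiv.ofBijective ![⟨(0, 1), by decide⟩, ⟨(0, 2), by decide⟩, ⟨(0, 3), by decide⟩,
    ⟨(1, 2), by decide⟩, ⟨(1, 3), by decide⟩, ⟨(2, 3), by decide⟩] (by decide)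

theorem D2_eq_submatrix_koszulMatrix :
    D2 = (koszulMatrix (cyclicForm nilGen)).submatrix (Equiv.refl _) lexPair := by
  have neg_eq (s : Squot) : -s = s := by linear_combination -s * two_eq_zero
  ext i j
  rw [submatrix_apply, koszulMatrix_apply, cyclicForm_nilGen]
  fin_cases i <;> fin_cases j <;> simp [D2, lexPair, neg_eq]

theorem D3_eq_transpose : D3 = (D2.submatrix Fin.revPerm Fin.revPerm)ᵀ := by
  ext i j
  fin_cases i <;> fin_cases j <;> rfl

theorem D2_mul_D3 : D2 * D3 = 0 := by
  have mul_add_mul_comm (r s : Squot) : r * s + s * r = 0 := by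
    linear_combination r * s * two_eq_zero
  ext i j
  fin_cases i <;> fin_cases j <;>
    simp [D2, D3, Matrix.mul_apply, Fin.sum_univ_six, mul_add_mul_comm]

theorem finrank_Squot : Module.finrank (ZMod 2) Squot = 16 :=
  finrank_eq_two_pow nilGen_sq adjoin_range_nilGen prod_nilGen_ne_zero

theorem finite_Squot : Module.Finite (ZMod 2) Squot :=
  Module.finite_of_finrank_pos (by rw [finrank_Squot]; decide)

theorem scalarRank_D2 : scalarRank (ZMod 2) D2 = 26 := by
  rw [D2_eq_submatrix_koszulMatrix, scalarRank_submatrix]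
  exact scalarRank_koszulMatrix_cyclicForm nilGen_sq adjoin_range_nilGen prod_nilGen_ne_zero

theorem scalarRank_D3 : scalarRank (ZMod 2) D3 = 26 := by
  have := finite_Squot
  obtain ⟨τ, hτ⟩ :=
    exists_dual_mul_ne_zero (K := ZMod 2) nilGen_sq adjoin_range_nilGen prod_nilGen_ne_zero
  rw [D3_eq_transpose, scalarRank_transpose hτ, scalarRank_submatrix, scalarRank_D2]

end Squot

end MulticycleCode

/-- With `S = 𝔽₂[w,x,y,z]/⟨w²−1, x²−1, y²−1, z²−1⟩` (16-dimensional over `𝔽₂`)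
and `F = (1+x)(1+yz)`, `G = (1+y)(1+zw)`, `H = (1+z)(1+wx)`,
`I = (1+w)(1+xy)`, the `𝔽₂`-linear maps `d₂ : S⁶ → S⁴` and `d₃ : S⁴ → S⁶`
given by the Koszul block matrices `D₂`, `D₃` (between spaces of dimensions 96
and 64) satisfy `d₂ ∘ d₃ = 0` and `dim ker d₂ − dim im d₃ = 44`: this
multivariate multicycle code encodes `k = 44` logical qubits in `n = 96`
physical qubits. -/
theorem mm_code_96_44 :
    Module.finrank (ZMod 2) Squot = 16 ∧
    Module.finrank (ZMod 2) (Fin 6 → Squot) = 96 ∧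
    Module.finrank (ZMod 2) (Fin 4 → Squot) = 64 ∧
    (D2.mulVecLin.restrictScalars (ZMod 2)) ∘ₗ
      (D3.mulVecLin.restrictScalars (ZMod 2)) = 0 ∧
    Module.finrank (ZMod 2)
        (LinearMap.ker (D2.mulVecLin.restrictScalars (ZMod 2))) -
      Module.finrank (ZMod 2)
        (LinearMap.range (D3.mulVecLin.restrictScalars (ZMod 2))) = 44 := by
  have := MulticycleCode.finite_Squot
  have finrank_pi (n : ℕ) : Module.finrank (ZMod 2) (Fin n → Squot) = n * 16 := by
    rw [Module.finrank_pi_fintype, Finset.sum_const, Finset.card_univ, Fintype.card_fin,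
      MulticycleCode.finrank_Squot, smul_eq_mul]
  refine ⟨MulticycleCode.finrank_Squot, finrank_pi 6, finrank_pi 4, ?_, ?_⟩
  · refine LinearMap.ext fun v => (mulVec_mulVec v D2 D3).trans ?_
    rw [MulticycleCode.D2_mul_D3, zero_mulVec, LinearMap.zero_apply]
  · have rank_nullity := (D2.mulVecLin.restrictScalars (ZMod 2)).finrank_range_add_finrank_ker
    have rank_D2 := MulticycleCode.scalarRank_D2
    have rank_D3 := MulticycleCode.scalarRank_D3
    rw [finrank_pi 6] at rank_nullity
    rw [MulticycleCode.scalarRank] at rank_D2 rank_D3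
    lia

end
end

section
/- Let S = F₂[w, x, y, z] / ⟨w² − 1, x² − 1, y² − 1, z² − 1⟩ with F₂-basis the 16 monomials wᵃxᵇyᶜzᵈ (a,b,c,d ∈ {0,1}), and let F = (1 + x)(1 + yz), G = (1 + y)(1 + zw), H = (1 + z)(1 + wx), I = (1 + w)(1 + xy) in S. Let d₂ : S⁶ → S⁴ and d₃ : S⁴ → S⁶ be the S-linear maps given by the block matrices D₂ = [[G,H,I,0,0,0],[F,0,0,H,I,0],[0,F,0,G,0,I],[0,0,F,0,G,H]] and D₃ = [[H,I,0,0],[G,0,I,0],[0,G,H,0],[F,0,0,I],[0,F,0,H],[0,0,F,G]]. For v ∈ S⁶ define the Hamming weight |v| as the number of nonzero coordinates of v with respect to the F₂-basis of S⁶ consisting of monomials in each of the 6 copies of S (so S⁶ ≅ F₂^96 coordinatewise). Then the Z-distance of this code equals 4: every v ∈ ker(d₂) with v ∉ im(d₃) satisfies |v| ≥ 4, and there exists v ∈ ker(d₂) ∖ im(d₃) with |v| = 4. -/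
open MvPolynomial Matrix

set_option synthInstance.maxHeartbeats 1000000
set_option maxHeartbeats 2000000

noncomputable section

/-!
`S` is the group algebra of `(ℤ/2)⁴`; write `N` for the sum of its 16 monomials, so that
`N * s = ε(s) N` where `ε(s)` is the parity of the weight of `s`. Each of `F, G, H, I` has a dual
multiplier that sends it to `N` and annihilates the other three; for `F` it is `(1 + z)(1 + w)`.
Hence `D₂` has a left inverse up to the factor `N`, and every entry of a vector in `ker d₂` has
even weight. A nonzero vector of `ker d₂` of weight less than `4` would thus be a single entry
`g + h` with `g ≠ h` monomials, and then `g / h` would stabilise both nonzero entries of a column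
of `D₂`. But the stabilisers of `F, G, H, I` are their supports, which meet pairwise only in `1`.

The bound is attained by the dual multiplier `(1 + x)(1 + y)` of `H` placed in the first
coordinate: it annihilates `F` and `G`, while the multiplier of `F` sends it to `N ≠ 0` and the
first row `(H, I, 0, 0)` of `D₃` to zero.
-/

open Module (Basis)

section Coordinates

variable {R M G ι : Type*} [Semiring R] [AddCommMonoid M] [Module R M] (B : Basis G R M)

theorem support_repr_sum [Nontrivial R] (A : Finset G) :
    (B.repr (∑ a ∈ A, B a)).support = A := by
  classical
  ext g
  simp [Finsupp.finsetSum_apply, Finsupp.single_apply]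

theorem sum_basis_ne_zero [Nontrivial R] [Fintype G] [Nonempty G] : ∑ g, B g ≠ 0 := by
  intro h
  have hsupp := support_repr_sum B Finset.univ
  rw [h, map_zero, Finsupp.support_zero] at hsupp
  exact Finset.univ_nonempty.ne_empty hsupp.symm

/-- The Hamming weight of a vector `v` of elements of `M`, in the coordinates that the basis `B`
of `M` gives to every entry. -/
def blockWeight [Fintype ι] (v : ι → M) : ℕ :=
  ∑ i, (B.repr (v i)).support.card

variable [DecidableEq ι]

theorem repr_apply_of_eq_single (b : Basis (ι × G) R (ι → M))
    (hb : ∀ i g, b (i, g) = Pi.single i (B g)) (v : ι → M) (i : ι) (g : G) :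
    b.repr v (i, g) = B.repr (v i) g := by
  classical
  suffices h : Finsupp.lapply (i, g) ∘ₗ b.repr.toLinearMap =
      Finsupp.lapply g ∘ₗ B.repr.toLinearMap ∘ₗ LinearMap.proj i from
    LinearMap.congr_fun h v
  refine b.ext fun ⟨j, h⟩ => ?_
  have hleft : b.repr (b (j, h)) (i, g) = if j = i ∧ h = g then 1 else 0 := by
    simp [Finsupp.single_apply]
  have hright : B.repr (b (j, h) i) g = if j = i ∧ h = g then 1 else 0 := by
    by_cases hji : j = i
    · subst hji
      simp [hb, Finsupp.single_apply]
    · simp [hb, hji, Ne.symm hji]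
  exact hleft.trans hright.symm

variable [Fintype ι]

theorem blockWeight_single (i : ι) (s : M) :
    blockWeight B (Pi.single i s) = (B.repr s).support.card := by
  rw [blockWeight, Finset.sum_eq_single i (fun j _ hji => by simp [hji]) (by simp),
    Pi.single_eq_same]

theorem card_support_repr_eq_blockWeight (b : Basis (ι × G) R (ι → M))
    (hb : ∀ i g, b (i, g) = Pi.single i (B g)) (v : ι → M) :
    (b.repr v).support.card = blockWeight B v := by
  rw [blockWeight, ← Finset.card_sigma]
  refine Finset.card_equiv (Equiv.sigmaEquivProd ι G).symm fun ⟨i, g⟩ => ?_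
  simp [repr_apply_of_eq_single B b hb]

variable {B} in
theorem exists_eq_single_of_blockWeight_lt_four {v : ι → M}
    (heven : ∀ i, Even (B.repr (v i)).support.card) (hv : v ≠ 0) (hlt : blockWeight B v < 4) :
    ∃ i s, v = Pi.single i s ∧ (B.repr s).support.card = 2 := by
  obtain ⟨i, hi⟩ := Function.ne_iff.1 hv
  have hpos : (B.repr (v i)).support.card ≠ 0 := by simpa using hi
  have hle_weight : (B.repr (v i)).support.card ≤ blockWeight B v :=
    Finset.single_le_sum (f := fun j => (B.repr (v j)).support.card) (by simp) (Finset.mem_univ i)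
  have hrest (j : ι) (hij : i ≠ j) : (B.repr (v j)).support.card = 0 := by
    have hadd : (B.repr (v i)).support.card + (B.repr (v j)).support.card ≤ blockWeight B v :=
      Finset.add_le_sum (f := fun j => (B.repr (v j)).support.card) (by simp)
        (Finset.mem_univ i) (Finset.mem_univ j) hij
    grind
  refine ⟨i, v i, funext fun j => ?_, by grind⟩
  rcases eq_or_ne i j with rfl | hij
  · rw [Pi.single_eq_same]
  · rw [Pi.single_eq_of_ne hij.symm]
    simpa using hrest j hij

end Coordinates

/-- A basis of `S` indexed by a group that turns addition into multiplication: it identifies `S`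
with the group algebra `R[G]`. -/
structure IsMultiplicativeBasis {R S G : Type*} [CommSemiring R] [CommSemiring S] [Algebra R S]
    [AddCommGroup G] (B : Basis G R S) : Prop where
  basis_add : ∀ g h, B (g + h) = B g * B h

namespace IsMultiplicativeBasis

section GroupAlgebra

variable {R S G : Type*} [CommSemiring R] [CommSemiring S] [Algebra R S] [AddCommGroup G]
  {B : Basis G R S}

theorem basis_zero (hB : IsMultiplicativeBasis B) : B 0 = 1 := by
  have h : LinearMap.mulLeft R (B 0) = LinearMap.id :=
    B.ext fun g => by rw [LinearMap.mulLeft_apply, ← hB.basis_add, zero_add, LinearMap.id_apply]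
  simpa using LinearMap.congr_fun h 1

theorem repr_mul_basis (hB : IsMultiplicativeBasis B) (s : S) (g k : G) :
    B.repr (s * B k) (g + k) = B.repr s g := by
  classical
  suffices h : Finsupp.lapply (g + k) ∘ₗ B.repr.toLinearMap ∘ₗ LinearMap.mulRight R (B k) =
      Finsupp.lapply g ∘ₗ B.repr.toLinearMap from LinearMap.congr_fun h s
  exact B.ext fun h => by simp [← hB.basis_add, Finsupp.single_apply]

theorem mem_of_sum_mul_basis_eq [Nontrivial R] (hB : IsMultiplicativeBasis B) {A : Finset G}
    (hA : 0 ∈ A) {k : G} (hk : (∑ a ∈ A, B a) * B k = ∑ a ∈ A, B a) : k ∈ A := by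
  have hcoeff := hB.repr_mul_basis (∑ a ∈ A, B a) 0 k
  rw [zero_add, hk] at hcoeff
  rw [← support_repr_sum B A, Finsupp.mem_support_iff] at hA ⊢
  rwa [hcoeff]

theorem one_add_mul_one_add [DecidableEq G] (hB : IsMultiplicativeBasis B) {g h : G}
    (hg : g ≠ 0) (hh : h ≠ 0) (hgh : g ≠ h) (hadd : g + h ≠ 0) :
    (1 + B g) * (1 + B h) = ∑ a ∈ {0, g, h, g + h}, B a := by
  rw [Finset.sum_insert (by simp [hg.symm, hh.symm, hadd.symm]),
    Finset.sum_insert (by simp [hgh, hh]), Finset.sum_pair (by simpa using hg),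
    hB.basis_zero, hB.basis_add]
  ring

theorem sum_basis_mul [Fintype G] (hB : IsMultiplicativeBasis B) (s : S) :
    (∑ g, B g) * s = (∑ g, B.repr s g) • ∑ g, B g := by
  have hmul (k : G) : (∑ g, B g) * B k = ∑ g, B g := by
    simp_rw [Finset.sum_mul, ← hB.basis_add]
    exact Equiv.sum_comp (Equiv.addRight k) B
  conv_lhs => rw [← B.sum_repr s]
  simp_rw [Finset.mul_sum, mul_smul_comm, hmul, ← Finset.sum_smul]

end GroupAlgebra

end IsMultiplicativeBasis

section Binary

theorem apply_eq_one_of_mem_support {G : Type*} {f : G →₀ ZMod 2} {g : G} (hg : g ∈ f.support) :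
    f g = 1 :=
  Fin.eq_one_of_ne_zero _ (Finsupp.mem_support_iff.1 hg)

theorem natCast_card_support_eq_sum {G : Type*} [Fintype G] (f : G →₀ ZMod 2) :
    (f.support.card : ZMod 2) = ∑ g, f g := by
  calc (f.support.card : ZMod 2) = ∑ g ∈ f.support, f g := by
        rw [Finset.cast_card]
        exact Finset.sum_congr rfl fun g hg => (apply_eq_one_of_mem_support hg).symm
    _ = ∑ g, f g := Finset.sum_subset (Finset.subset_univ _) fun g _ hg =>
        Finsupp.notMem_support_iff.1 hg

theorem sum_support_repr {G M : Type*} [AddCommGroup M] [Module (ZMod 2) M]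
    (B : Basis G (ZMod 2) M) (s : M) : ∑ g ∈ (B.repr s).support, B g = s := by
  conv_rhs => rw [← B.linearCombination_repr s, Finsupp.linearCombination_apply, Finsupp.sum]
  exact Finset.sum_congr rfl fun g hg => by rw [apply_eq_one_of_mem_support hg, one_smul]

variable {S G m n : Type*} [CommRing S] [Algebra (ZMod 2) S] [AddCommGroup G]
  {B : Basis G (ZMod 2) S}

namespace IsMultiplicativeBasis

theorem even_card_support_repr [Fintype G] (hB : IsMultiplicativeBasis B) {s : S}
    (hs : (∑ g, B g) * s = 0) : Even (B.repr s).support.card := by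
  rw [hB.sum_basis_mul, smul_eq_zero_iff_left (sum_basis_ne_zero B),
    ← natCast_card_support_eq_sum] at hs
  exact ZMod.natCast_eq_zero_iff_even.1 hs

theorem mul_basis_sub_eq_of_mul_add_eq_zero (hB : IsMultiplicativeBasis B) {p : S} {g h : G}
    (hp : p * (B g + B h) = 0) : p * B (g - h) = p := by
  have hgh : p * B g = p * B h := by
    rwa [mul_add, ← ZModModule.sub_eq_add, sub_eq_zero] at hp
  calc p * B (g - h) = p * B g * B (-h) := by rw [sub_eq_add_neg, hB.basis_add, mul_assoc]
    _ = p := by rw [hgh, mul_assoc, ← hB.basis_add, add_neg_cancel, hB.basis_zero, mul_one]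

theorem card_support_repr_ne_two (hB : IsMultiplicativeBasis B) {ι : Type*} {p : ι → S}
    (hp : ∀ k, (∀ j, p j * B k = p j) → k = 0) {s : S} (hs : ∀ j, p j * s = 0) :
    (B.repr s).support.card ≠ 2 := by
  classical
  intro hcard
  obtain ⟨g, h, hgh, hsupp⟩ := Finset.card_eq_two.1 hcard
  have hs_eq : s = B g + B h := by
    rw [← Finset.sum_pair hgh, ← hsupp, sum_support_repr]
  exact hgh (sub_eq_zero.1 (hp _ fun j =>
    hB.mul_basis_sub_eq_of_mul_add_eq_zero (hs_eq ▸ hs j)))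

end IsMultiplicativeBasis

theorem four_le_blockWeight [Fintype n] [DecidableEq n] [Fintype m] [Fintype G]
    (hB : IsMultiplicativeBasis B) {D : Matrix m n S}
    {Q : Matrix n m S} (hQ : Q * D = (∑ g, B g) • (1 : Matrix n n S))
    (hD : ∀ i k, (∀ j, D j i * B k = D j i) → k = 0) {v : n → S} (hv : D.mulVec v = 0)
    (hv0 : v ≠ 0) : 4 ≤ blockWeight B v := by
  have hsum : (∑ g, B g) • v = 0 := by
    rw [← Matrix.one_mulVec v, ← Matrix.smul_mulVec, ← hQ, ← Matrix.mulVec_mulVec, hv,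
      Matrix.mulVec_zero]
  have heven (i : n) : Even (B.repr (v i)).support.card :=
    hB.even_card_support_repr (congrFun hsum i)
  by_contra! hlt
  obtain ⟨i, s, rfl, hs⟩ := exists_eq_single_of_blockWeight_lt_four heven hv0 hlt
  refine hB.card_support_repr_ne_two (hD i) (fun j => ?_) hs
  simpa using congrFun hv j

end Binary

section CyclicDuality

theorem prod_univ_four_cyclic {M : Type*} [CommMonoid M] (f : Fin 4 → M) (k : Fin 4) :
    ∏ i, f i = f k * f (k + 1) * f (k + 2) * f (k + 3) := by
  rw [← Equiv.prod_comp (Equiv.addLeft k) f, Fin.prod_univ_four]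
  simp only [Equiv.coe_addLeft, add_zero]

variable {R : Type*} [CommRing R]

/-- The `k`-th of the elements `F, G, H, I`, which are cyclic shifts of each other when
`t = (w, x, y, z)`; indices are taken modulo `4`. -/
def cyclicElement (t : Fin 4 → R) (k : Fin 4) : R :=
  (1 + t (k + 1)) * (1 + t (k + 2) * t (k + 3))

/-- The dual multiplier of `cyclicElement t k`, annihilating the other three cyclic elements when
the `t i` are involutions in characteristic `2`. -/
def cyclicDual (t : Fin 4 → R) (k : Fin 4) : R :=
  (1 + t (k + 3)) * (1 + t k)

theorem cyclicDual_mul_cyclicDual_add_two (t : Fin 4 → R) (k : Fin 4) :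
    cyclicDual t k * cyclicDual t (k + 2) = ∏ i, (1 + t i) := by
  have hwrap : k + 2 + 3 = k + 1 := by rw [add_assoc]; rfl
  rw [prod_univ_four_cyclic _ k, cyclicDual, cyclicDual, hwrap]
  ring

theorem one_add_mul_mul_one_add {s t : R} (ht : t * t = 1) :
    (1 + s * t) * (1 + t) = (1 + s) * (1 + t) := by
  linear_combination s * ht

variable [Algebra (ZMod 2) R]

theorem one_add_mul_self_eq_zero {s : R} (hs : s * s = 1) : (1 + s) * (1 + s) = 0 := by
  linear_combination hs + ZModModule.add_self (1 + s)

theorem cyclicDual_mul_cyclicElement {t : Fin 4 → R} (ht : ∀ i, t i * t i = 1) (k j : Fin 4) :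
    cyclicDual t k * cyclicElement t j = if k = j then ∏ i, (1 + t i) else 0 := by
  obtain ⟨δ, rfl⟩ : ∃ δ, j = k + δ := ⟨j - k, by simp⟩
  have hsq (i : Fin 4) := one_add_mul_self_eq_zero (ht i)
  have habsorb (i j : Fin 4) := one_add_mul_mul_one_add (s := t i) (ht j)
  rw [prod_univ_four_cyclic _ k, cyclicDual, cyclicElement]
  fin_cases δ <;> simp only [add_assoc, add_zero, left_eq_add, Fin.isValue, Fin.zero_eta,
    Fin.mk_one, Fin.reduceFinMk, Fin.reduceAdd, Fin.reduceEq, one_ne_zero, ↓reduceIte]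
  · linear_combination (1 + t k) * (1 + t (k + 1)) * habsorb (k + 2) (k + 3)
  · linear_combination (1 + t (k + 2)) *
      ((1 + t (k + 3)) * habsorb (k + 3) k + (1 + t k) * hsq (k + 3))
  · linear_combination (1 + t k) * (1 + t k * t (k + 1)) * hsq (k + 3)
  · linear_combination (1 + t (k + 3)) * (1 + t (k + 1) * t (k + 2)) * hsq k

end CyclicDuality

section GroupAlgebraModel

/-- Exponent vectors of the monomials `wᵃxᵇyᶜzᵈ`, added modulo `2`. -/
abbrev Exponent : Type := Fin 2 × Fin 2 × Fin 2 × Fin 2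

/-- The monomial `wᵃxᵇyᶜzᵈ` with exponent vector `(a, b, c, d)`. -/
def squotMonomial (g : Exponent) : Squot :=
  wq ^ (g.1 : ℕ) * xq ^ (g.2.1 : ℕ) * yq ^ (g.2.2.1 : ℕ) * zq ^ (g.2.2.2 : ℕ)

/-- The family `(w, x, y, z)`. -/
def squotGen (i : Fin 4) : Squot := Ideal.Quotient.mk relIdeal (X i)

/-- The exponent vectors of `w, x, y, z`. -/
def genExponent : Fin 4 → Exponent := ![(1, 0, 0, 0), (0, 1, 0, 0), (0, 0, 1, 0), (0, 0, 0, 1)]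

theorem squotMonomial_genExponent (i : Fin 4) : squotMonomial (genExponent i) = squotGen i := by
  fin_cases i <;> simp [squotMonomial, genExponent, squotGen, wq, xq, yq, zq]

theorem squotGen_mul_self (i : Fin 4) : squotGen i * squotGen i = 1 := by
  rw [squotGen, ← map_mul, ← map_one (Ideal.Quotient.mk relIdeal), Ideal.Quotient.eq, ← sq]
  apply Ideal.subset_span
  fin_cases i <;> simp

theorem pow_val_add_of_mul_self_eq_one {M : Type*} [Monoid M] {t : M} (ht : t * t = 1)
    (a c : Fin 2) : t ^ ((a + c : Fin 2) : ℕ) = t ^ (a : ℕ) * t ^ (c : ℕ) := by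
  fin_cases a <;> fin_cases c <;> simp [ht]

theorem squotMonomial_zero : squotMonomial 0 = 1 := by simp [squotMonomial]

theorem squotMonomial_add (g h : Exponent) :
    squotMonomial (g + h) = squotMonomial g * squotMonomial h := by
  have hw := pow_val_add_of_mul_self_eq_one (show wq * wq = 1 from squotGen_mul_self 0)
  have hx := pow_val_add_of_mul_self_eq_one (show xq * xq = 1 from squotGen_mul_self 1)
  have hy := pow_val_add_of_mul_self_eq_one (show yq * yq = 1 from squotGen_mul_self 2)
  have hz := pow_val_add_of_mul_self_eq_one (show zq * zq = 1 from squotGen_mul_self 3)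
  simp only [squotMonomial, Prod.fst_add, Prod.snd_add, hw, hx, hy, hz]
  ring

/-- The substitution of the group elements of `(ℤ/2)⁴` for `w, x, y, z`. -/
def substGroupElements :
    MvPolynomial (Fin 4) (ZMod 2) →ₐ[ZMod 2] AddMonoidAlgebra (ZMod 2) Exponent :=
  aeval fun i => AddMonoidAlgebra.single (genExponent i) 1

theorem relIdeal_le_ker_substGroupElements : relIdeal ≤ RingHom.ker substGroupElements := by
  have hsq (i : Fin 4) : substGroupElements (X i ^ 2 - 1) = 0 := by
    have hexp : 2 • genExponent i = 0 := by revert i; decide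
    rw [map_sub, map_pow, map_one, substGroupElements, aeval_X, AddMonoidAlgebra.single_pow, hexp,
      one_pow, ← AddMonoidAlgebra.one_def, sub_self]
  rw [relIdeal, Ideal.span_le]
  rintro _ (rfl | rfl | rfl | rfl) <;> exact hsq _

/-- The algebra map sending each of `w, x, y, z` to the corresponding group element. -/
def squotToGroupAlgebra : Squot →ₐ[ZMod 2] AddMonoidAlgebra (ZMod 2) Exponent :=
  Ideal.Quotient.liftₐ relIdeal substGroupElements relIdeal_le_ker_substGroupElements

theorem squotToGroupAlgebra_squotGen (i : Fin 4) :
    squotToGroupAlgebra (squotGen i) = AddMonoidAlgebra.single (genExponent i) 1 :=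
  aeval_X _ i

theorem squotToGroupAlgebra_squotMonomial (g : Exponent) :
    squotToGroupAlgebra (squotMonomial g) = AddMonoidAlgebra.single g 1 := by
  have hw : squotToGroupAlgebra wq = _ := squotToGroupAlgebra_squotGen 0
  have hx : squotToGroupAlgebra xq = _ := squotToGroupAlgebra_squotGen 1
  have hy : squotToGroupAlgebra yq = _ := squotToGroupAlgebra_squotGen 2
  have hz : squotToGroupAlgebra zq = _ := squotToGroupAlgebra_squotGen 3
  simp only [squotMonomial, map_mul, map_pow, hw, hx, hy, hz, AddMonoidAlgebra.single_pow,
    AddMonoidAlgebra.single_mul_single, one_pow, mul_one]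
  congr 1
  revert g
  decide

/-- The algebra map sending each group element to the corresponding monomial. -/
def groupAlgebraToSquot : AddMonoidAlgebra (ZMod 2) Exponent →ₐ[ZMod 2] Squot :=
  AddMonoidAlgebra.lift (ZMod 2) Squot Exponent
    { toFun := fun g => squotMonomial g.toAdd
      map_one' := squotMonomial_zero
      map_mul' := fun g h => squotMonomial_add g.toAdd h.toAdd }

theorem groupAlgebraToSquot_single (g : Exponent) :
    groupAlgebraToSquot (AddMonoidAlgebra.single g 1) = squotMonomial g := by
  simp [groupAlgebraToSquot]

/-- `S` as the group algebra of `(ℤ/2)⁴`. -/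
def squotEquivGroupAlgebra : Squot ≃ₐ[ZMod 2] AddMonoidAlgebra (ZMod 2) Exponent :=
  AlgEquiv.ofAlgHom squotToGroupAlgebra groupAlgebraToSquot
    (AddMonoidAlgebra.algHom_ext (fun g => by
      simp [groupAlgebraToSquot_single, squotToGroupAlgebra_squotMonomial]) (Subsingleton.elim _ _))
    (Ideal.Quotient.algHom_ext _ <| MvPolynomial.algHom_ext fun i => by
      change groupAlgebraToSquot (squotToGroupAlgebra (squotGen i)) = squotGen i
      rw [squotToGroupAlgebra_squotGen, groupAlgebraToSquot_single, squotMonomial_genExponent])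

/-- The basis of `S` formed by the monomials `wᵃxᵇyᶜzᵈ`. -/
def squotBasis : Basis Exponent (ZMod 2) Squot :=
  (AddMonoidAlgebra.basis Exponent (ZMod 2)).map squotEquivGroupAlgebra.symm.toLinearEquiv

theorem squotBasis_apply (g : Exponent) : squotBasis g = squotMonomial g := by
  rw [squotBasis, Basis.map_apply, AddMonoidAlgebra.basis_apply]
  exact groupAlgebraToSquot_single g

theorem isMultiplicativeBasis_squotBasis : IsMultiplicativeBasis squotBasis where
  basis_add g h := by simp only [squotBasis_apply, squotMonomial_add]

theorem squotBasis_genExponent (i : Fin 4) : squotBasis (genExponent i) = squotGen i := by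
  rw [squotBasis_apply, squotMonomial_genExponent]

theorem prod_one_add_squotGen : ∏ i, (1 + squotGen i) = ∑ g, squotBasis g := by
  have hgen : ∏ i, (1 + squotGen i) = (1 + wq) * (1 + xq) * (1 + yq) * (1 + zq) :=
    Fin.prod_univ_four _
  simp only [hgen, squotBasis_apply, squotMonomial, Fintype.sum_prod_type, Fin.sum_univ_two,
    Fin.val_zero, Fin.val_one, pow_zero, pow_one]
  ring

end GroupAlgebraModel

section Code

theorem Fq_eq_cyclicElement : Fq = cyclicElement squotGen 0 := rfl
theorem Gq_eq_cyclicElement : Gq = cyclicElement squotGen 1 := rfl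
theorem Hq_eq_cyclicElement : Hq = cyclicElement squotGen 2 := rfl
theorem Iq_eq_cyclicElement : Iq = cyclicElement squotGen 3 := rfl

/-- A left inverse of `D2` up to the sum of all monomials. Each column of `D2` holds some
`cyclicElement squotGen k` in its first nonzero row; the dual multiplier of that element stands in
the transposed position here. -/
def D2Dual : Matrix (Fin 6) (Fin 4) Squot :=
  !![cyclicDual squotGen 1, 0, 0, 0;
     cyclicDual squotGen 2, 0, 0, 0;
     cyclicDual squotGen 3, 0, 0, 0;
     0, cyclicDual squotGen 2, 0, 0;
     0, cyclicDual squotGen 3, 0, 0;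
     0, 0, cyclicDual squotGen 3, 0]

theorem D2Dual_mul_D2 : D2Dual * D2 = (∑ g, squotBasis g) • 1 := by
  ext i j
  simp only [Matrix.mul_apply, Fin.sum_univ_four, D2, Fq_eq_cyclicElement, Gq_eq_cyclicElement,
    Hq_eq_cyclicElement, Iq_eq_cyclicElement, ← prod_one_add_squotGen]
  fin_cases i <;> fin_cases j <;>
    simp [D2Dual, cyclicDual_mul_cyclicElement squotGen_mul_self]

/-- The exponent vectors of the monomials occurring in `cyclicElement squotGen k`. -/
def cyclicSupport (k : Fin 4) : Finset Exponent :=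
  {0, genExponent (k + 1), genExponent (k + 2) + genExponent (k + 3),
    genExponent (k + 1) + (genExponent (k + 2) + genExponent (k + 3))}

theorem cyclicElement_squotGen_eq_sum (k : Fin 4) :
    cyclicElement squotGen k = ∑ g ∈ cyclicSupport k, squotBasis g := by
  simp only [cyclicElement, ← squotBasis_genExponent, ← isMultiplicativeBasis_squotBasis.basis_add]
  apply isMultiplicativeBasis_squotBasis.one_add_mul_one_add <;> revert k <;> decide

theorem cyclicSupport_inter {k j : Fin 4} (hkj : k ≠ j) :
    cyclicSupport k ∩ cyclicSupport j = {0} := by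
  revert k j
  decide

theorem eq_zero_of_cyclicElement_mul_eq {k j : Fin 4} (hkj : k ≠ j) {g : Exponent}
    (hk : cyclicElement squotGen k * squotBasis g = cyclicElement squotGen k)
    (hj : cyclicElement squotGen j * squotBasis g = cyclicElement squotGen j) : g = 0 := by
  rw [cyclicElement_squotGen_eq_sum] at hk hj
  have hmem := Finset.mem_inter.2
    ⟨isMultiplicativeBasis_squotBasis.mem_of_sum_mul_basis_eq (by simp [cyclicSupport]) hk,
      isMultiplicativeBasis_squotBasis.mem_of_sum_mul_basis_eq (by simp [cyclicSupport]) hj⟩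
  simpa [cyclicSupport_inter hkj] using hmem

theorem exists_D2_eq_cyclicElement (i : Fin 6) :
    ∃ r s k j, k ≠ j ∧ D2 r i = cyclicElement squotGen k ∧ D2 s i = cyclicElement squotGen j := by
  fin_cases i
  exacts [⟨0, 1, 1, 0, by decide, rfl, rfl⟩, ⟨0, 2, 2, 0, by decide, rfl, rfl⟩,
    ⟨0, 3, 3, 0, by decide, rfl, rfl⟩, ⟨1, 2, 2, 1, by decide, rfl, rfl⟩,
    ⟨1, 3, 3, 1, by decide, rfl, rfl⟩, ⟨2, 3, 3, 2, by decide, rfl, rfl⟩]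

theorem eq_zero_of_D2_column_mul_eq (i : Fin 6) (g : Exponent)
    (hg : ∀ j, D2 j i * squotBasis g = D2 j i) : g = 0 := by
  obtain ⟨r, s, k, j, hkj, hr, hs⟩ := exists_D2_eq_cyclicElement i
  exact eq_zero_of_cyclicElement_mul_eq hkj (hr ▸ hg r) (hs ▸ hg s)

/-- A nontrivial `Z`-type logical operator: `(1 + x)(1 + y)` in the first coordinate. -/
def weightFourLogical : Fin 6 → Squot := Pi.single 0 (cyclicDual squotGen 2)

theorem D2_mulVec_weightFourLogical : D2.mulVec weightFourLogical = 0 := by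
  ext j
  fin_cases j <;>
    simp [weightFourLogical, D2, Fq_eq_cyclicElement, Gq_eq_cyclicElement,
      mul_comm _ (cyclicDual _ _), cyclicDual_mul_cyclicElement squotGen_mul_self]

theorem D3_mulVec_ne_weightFourLogical (u : Fin 4 → Squot) : D3.mulVec u ≠ weightFourLogical := by
  intro hu
  have hrow : cyclicElement squotGen 2 * u 0 + cyclicElement squotGen 3 * u 1 =
      cyclicDual squotGen 2 := by
    simpa [weightFourLogical, D3, Matrix.mulVec, dotProduct, Fin.sum_univ_four,
      Hq_eq_cyclicElement, Iq_eq_cyclicElement] using congrFun hu 0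
  have hH := cyclicDual_mul_cyclicElement squotGen_mul_self 0 2
  have hI := cyclicDual_mul_cyclicElement squotGen_mul_self 0 3
  apply sum_basis_ne_zero squotBasis
  calc ∑ g, squotBasis g = cyclicDual squotGen 0 * cyclicDual squotGen 2 := by
        rw [← prod_one_add_squotGen, ← cyclicDual_mul_cyclicDual_add_two squotGen 0, zero_add]
    _ = cyclicDual squotGen 0 * cyclicElement squotGen 2 * u 0 +
          cyclicDual squotGen 0 * cyclicElement squotGen 3 * u 1 := by rw [← hrow]; ring
    _ = 0 := by simp [hH, hI]

theorem blockWeight_weightFourLogical : blockWeight squotBasis weightFourLogical = 4 := by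
  have hsum : cyclicDual squotGen 2 = ∑ g ∈ {0, genExponent 1, genExponent 2,
      genExponent 1 + genExponent 2}, squotBasis g := by
    rw [← isMultiplicativeBasis_squotBasis.one_add_mul_one_add (by decide) (by decide) (by decide)
      (by decide), squotBasis_genExponent, squotBasis_genExponent]
    rfl
  rw [weightFourLogical, blockWeight_single, hsum, support_repr_sum]
  decide

end Code

/-- With `S = 𝔽₂[w,x,y,z]/⟨w²−1, x²−1, y²−1, z²−1⟩`,
`F = (1+x)(1+yz)`, `G = (1+y)(1+zw)`, `H = (1+z)(1+wx)`, `I = (1+w)(1+xy)`,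
and the Koszul block matrices `D₂ : S⁶ → S⁴`, `D₃ : S⁴ → S⁶`: measuring the
Hamming weight `|v|` of `v ∈ S⁶ ≅ 𝔽₂⁹⁶` as the number of nonzero coordinates
in the `𝔽₂`-basis of `S⁶` consisting of the monomials `wᵃxᵇyᶜzᵈ` in each of
the 6 copies of `S`, the Z-distance of this `[[96,44,4]]` code equals `4`:
every `v ∈ ker d₂` with `v ∉ im d₃` has `|v| ≥ 4`, and some such `v` has
`|v| = 4`. -/
theorem mm_code_96_44_z_distance_eq_four
    (b : Module.Basis (Fin 6 × Fin 2 × Fin 2 × Fin 2 × Fin 2) (ZMod 2) (Fin 6 → Squot))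
    (hb : ∀ (i : Fin 6) (a₁ a₂ a₃ a₄ : Fin 2),
      b (i, a₁, a₂, a₃, a₄) =
        Pi.single i
          (wq ^ (a₁ : ℕ) * xq ^ (a₂ : ℕ) * yq ^ (a₃ : ℕ) * zq ^ (a₄ : ℕ))) :
    (∀ v : Fin 6 → Squot, D2.mulVec v = 0 → ¬(∃ u, D3.mulVec u = v) →
      4 ≤ (b.repr v).support.card) ∧
    (∃ v : Fin 6 → Squot, D2.mulVec v = 0 ∧ ¬(∃ u, D3.mulVec u = v) ∧
      (b.repr v).support.card = 4) := by
  have hb' (i : Fin 6) (g : Exponent) : b (i, g) = Pi.single i (squotBasis g) := by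
    rw [squotBasis_apply]
    exact hb i _ _ _ _
  simp only [card_support_repr_eq_blockWeight squotBasis b hb']
  refine ⟨fun v hv hv_im => ?_, weightFourLogical, D2_mulVec_weightFourLogical,
    fun ⟨u, hu⟩ => D3_mulVec_ne_weightFourLogical u hu, blockWeight_weightFourLogical⟩
  have hv0 : v ≠ 0 := by
    rintro rfl
    exact hv_im ⟨0, Matrix.mulVec_zero D3⟩
  exact four_le_blockWeight isMultiplicativeBasis_squotBasis D2Dual_mul_D2
    eq_zero_of_D2_column_mul_eq hv hv0

end
end
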